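/- arXiv:1705.04912 — 11 statements merged into one kernel-verified Lean document; each statement's English description precedes it below -/
import Mathlib

section
/- Let a, b, r be integers with r ≥ 1 and let G = G^{(a,b,r,1)}. Then the leading principal minor of order n+1 of the Toeplitz matrix T_{G̃,G} satisfies: det T_{G̃,G}(0) = a, and for every n ≥ 1, det T_{G̃,G}(n) = (2b − a·r)^{n−1} · (a·G_{n−1} + b·G_n). -/
/-- The generalized Fibonacci (Gibonacci) sequence `G^{(a,b,r,1)}`:
`G 0 = a`, `G 1 = b`, `G n = r * G (n-1) + G (n-2)`. -/
def gib (a b r : ℤ) : ℕ → ℤ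
  | 0 => a
  | 1 => b
  | n + 2 => r * gib a b r (n + 1) + gib a b r n

/-- The Toeplitz matrix `T_{α,β}(n)` of order `n+1`: entry `(i,j)` is `α (i-j)` if `i ≥ j`
and `β (j-i)` if `i ≤ j` (consistent when `α 0 = β 0`). -/
def toeplitzM (α β : ℕ → ℤ) (n : ℕ) : Matrix (Fin (n + 1)) (Fin (n + 1)) ℤ :=
  Matrix.of fun i j => if (j : ℕ) ≤ (i : ℕ) then α ((i : ℕ) - (j : ℕ)) else β ((j : ℕ) - (i : ℕ))

def tE (a b r : ℤ) (i j : ℕ) : ℤ :=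
  if j ≤ i then (-1) ^ (i - j) * gib a b r (i - j) else gib a b r (j - i)

lemma tE_rec (a b r : ℤ) (i j : ℕ) :
    tE a b r i (j + 2) - r * tE a b r i (j + 1) - tE a b r i j =
      if i = j + 1 then 2 * b - a * r else 0 := by
  rcases Nat.lt_trichotomy i (j + 1) with h | h | h
  · obtain ⟨k, rfl⟩ := Nat.exists_eq_add_of_le (Nat.lt_succ_iff.mp h)
    have h1 : ¬ (i + k + 2 ≤ i) := by omega
    have h2 : ¬ (i + k + 1 ≤ i) := by omega
    have h3 : ¬ (i = i + k + 1) := by omega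
    have e2 : i + k + 2 - i = k + 2 := by omega
    have e1 : i + k + 1 - i = k + 1 := by omega
    have h0 : tE a b r i (i + k) = gib a b r k := by
      unfold tE
      rcases Nat.eq_zero_or_pos k with rfl | hk
      · simp
      · have : ¬ (i + k ≤ i) := by omega
        simp [this]
    rw [h0, if_neg h3]
    simp only [tE, if_neg h1, if_neg h2, e1, e2, gib]
    ring
  · subst h
    have h1 : ¬ (j + 2 ≤ j + 1) := by omega
    have e1 : j + 2 - (j + 1) = 1 := by omega
    have e2 : j + 1 - j = 1 := by omega
    simp [tE, e1, e2, gib]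
    ring
  · obtain ⟨k, rfl⟩ := Nat.exists_eq_add_of_le (Nat.succ_le_of_lt h)
    have h2 : j + 2 ≤ (j + 1).succ + k := by omega
    have h1 : j + 1 ≤ (j + 1).succ + k := by omega
    have h0 : j ≤ (j + 1).succ + k := by omega
    have e2 : (j + 1).succ + k - (j + 2) = k := by omega
    have e1 : (j + 1).succ + k - (j + 1) = k + 1 := by omega
    have e0 : (j + 1).succ + k - j = k + 2 := by omega
    have h3 : ¬ ((j + 1).succ + k = j + 1) := by omega
    simp only [tE, if_pos h2, if_pos h1, if_pos h0, if_neg h3, e0, e1, e2, gib]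
    ring

def pM (d : ℤ) (u v : ℕ → ℤ) (n : ℕ) : Matrix (Fin (n + 2)) (Fin (n + 2)) ℤ :=
  Matrix.of fun i j => if (j : ℕ) = 0 then u i else if (j : ℕ) = 1 then v i else
    if (i : ℕ) + 1 = j then d else 0

lemma pM_det (d : ℤ) (n : ℕ) : ∀ (u v : ℕ → ℤ),
    (pM d u v n).det = d ^ n * (-1) ^ n * (u 0 * v (n + 1) - v 0 * u (n + 1)) := by
  induction n with
  | zero => intro u v; simp [pM, Matrix.det_fin_two]
  | succ n ih =>
    intro u v
    rw [Matrix.det_succ_column _ (Fin.last (n + 2))]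
    rw [Finset.sum_eq_single (⟨n + 1, by omega⟩ : Fin (n + 3))]
    · have hs : (pM d u v (n + 1)).submatrix
          (Fin.succAbove (⟨n + 1, by omega⟩ : Fin (n + 3))) (Fin.succAbove (Fin.last (n + 2))) =
          pM d (fun i => u (if i < n + 1 then i else i + 1))
            (fun i => v (if i < n + 1 then i else i + 1)) n := by
        ext i j
        have hi : ((Fin.succAbove (⟨n + 1, by omega⟩ : Fin (n + 3)) i : Fin (n + 3)) : ℕ) =
            if (i : ℕ) < n + 1 then (i : ℕ) else i + 1 := by
          simp only [Fin.succAbove, Fin.lt_def, Fin.val_castSucc]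
          split_ifs <;> simp
        simp only [pM, Matrix.submatrix_apply, Matrix.of_apply, hi, Fin.succAbove_last,
          Fin.val_castSucc]
        have := i.2
        have := j.2
        split_ifs <;> first | rfl | omega
      rw [hs, ih]
      have hp : pM d u v (n + 1) ⟨n + 1, by omega⟩ (Fin.last (n + 2)) = d := by
        simp [pM]
      rw [hp]
      have hsgn : (-1 : ℤ) ^ (n + 1 + (n + 2)) = -1 := Odd.neg_one_pow ⟨n + 1, by ring⟩
      simp [hsgn]
      ring
    · intro i _ hi
      have : pM d u v (n + 1) i (Fin.last (n + 2)) = 0 := by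
        have : (i : ℕ) ≠ n + 1 := fun h => hi (Fin.ext h)
        simp [pM, this]
      simp [this]
    · simp

def uM (r : ℤ) (m : ℕ) : Matrix (Fin m) (Fin m) ℤ :=
  Matrix.of fun k j => if k = j then 1 else if 2 ≤ (j : ℕ) then
    (if (k : ℕ) + 1 = j then -r else if (k : ℕ) + 2 = j then -1 else 0) else 0

lemma uM_det (r : ℤ) (m : ℕ) : (uM r m).det = 1 := by
  rw [Matrix.det_of_upperTriangular]
  · simp [uM]
  · intro i j hij
    have hij' : (j : ℕ) < i := hij
    have h : i ≠ j := by rintro rfl; omega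
    have h1 : ¬ ((i : ℕ) + 1 = j) := by omega
    have h2 : ¬ ((i : ℕ) + 2 = j) := by omega
    simp [uM, h, h1, h2]

lemma mul_uM (a b r : ℤ) (n : ℕ) :
    (toeplitzM (fun i => (-1) ^ i * gib a b r i) (gib a b r) (n + 1)) * uM r (n + 2) =
      pM (2 * b - a * r) (fun i => tE a b r i 0) (fun i => tE a b r i 1) n := by
  ext i j
  have hT : ∀ k : Fin (n + 2),
      toeplitzM (fun i => (-1) ^ i * gib a b r i) (gib a b r) (n + 1) i k = tE a b r i k :=
    fun k => rfl
  simp only [Matrix.mul_apply, hT]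
  obtain ⟨j, hj⟩ := j
  match j, hj with
  | 0, hj => simp [uM, pM]
  | 1, hj => simp [uM, pM]
  | j + 2, hj =>
    have hU : ∀ k : Fin (n + 2), uM r (n + 2) k ⟨j + 2, hj⟩ =
        (if k = ⟨j + 2, hj⟩ then 1 else 0) + (if k = ⟨j + 1, by omega⟩ then -r else 0)
          + (if k = ⟨j, by omega⟩ then -1 else 0) := by
      intro k
      simp only [uM, Matrix.of_apply, Fin.ext_iff]
      split_ifs <;> first | omega | simp
    simp only [hU, mul_add, Finset.sum_add_distrib, mul_ite, mul_zero, Finset.sum_ite_eq',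
      Finset.sum_ite_eq, Finset.mem_univ, if_true]
    have := tE_rec a b r i j
    have hp : pM (2 * b - a * r) (fun i => tE a b r i 0) (fun i => tE a b r i 1) n i ⟨j + 2, hj⟩
        = if (i : ℕ) = j + 1 then 2 * b - a * r else 0 := by
      simp [pM]
    rw [hp, ← this]
    ring

/-- Theorem 3.1: for `G = G^{(a,b,r,1)}` with `r ≥ 1`, the leading principal minors of
`T_{G̃,G}` satisfy `det T(0) = a` and `det T(n) = (2b - ar)^(n-1) (a G_{n-1} + b G_n)` for `n ≥ 1`. -/
theorem det_toeplitz_gib (a b r : ℤ) (hr : 1 ≤ r) :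
    (toeplitzM (fun i => (-1) ^ i * gib a b r i) (gib a b r) 0).det = a ∧
    ∀ n : ℕ, 1 ≤ n →
      (toeplitzM (fun i => (-1) ^ i * gib a b r i) (gib a b r) n).det =
        (2 * b - a * r) ^ (n - 1) * (a * gib a b r (n - 1) + b * gib a b r n) := by
  refine ⟨by simp [toeplitzM, gib], ?_⟩
  intro n hn
  obtain ⟨n, rfl⟩ := Nat.exists_eq_add_of_le' hn
  have h := congrArg Matrix.det (mul_uM a b r n)
  rw [Matrix.det_mul, uM_det, mul_one, pM_det] at h
  rw [h]
  have h1 : (-1 : ℤ) ^ n * (-1) ^ n = 1 := by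
    rw [← mul_pow]; simp
  simp only [tE, gib, Nat.add_sub_cancel]
  simp [gib, pow_succ]
  linear_combination (2 * b - a * r) ^ n * (a * gib a b r n + b * gib a b r (n + 1)) * h1
end

section
/- Let m ≥ 0 be an integer and let α be the sequence α_i = F_{m+i}. Then for every n ≥ 1, det T_{α̃,α}(n) = L_m^{n−1} · F_{2m+n}, where L_m = F_{m+1} + F_{m−1} is the m-th Lucas number (for m = 0 one has L_0 = 2, so det T_{F̃,F}(n) = 2^{n−1}·F_n). -/
/-- The Fibonacci sequence (as integers): `F 0 = 0`, `F 1 = 1`, `F n = F (n-1) + F (n-2)`. -/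
def fibZ : ℕ → ℤ
  | 0 => 0
  | 1 => 1
  | n + 2 => fibZ (n + 1) + fibZ n

/-- The Lucas sequence: `L 0 = 2`, `L 1 = 1`, `L n = L (n-1) + L (n-2)`. -/
def lucasZ : ℕ → ℤ
  | 0 => 2
  | 1 => 1
  | n + 2 => lucasZ (n + 1) + lucasZ n

theorem fibZ_eq (n : ℕ) : fibZ n = (Nat.fib n : ℤ) := by
  induction n using Nat.twoStepInduction with
  | zero => simp [fibZ]
  | one => simp [fibZ]
  | more n h1 h2 => rw [fibZ, h1, h2, Nat.fib_add_two]; push_cast; ring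

theorem lucasZ_eq (n : ℕ) : lucasZ n = 2 * fibZ (n + 1) - fibZ n := by
  induction n using Nat.twoStepInduction with
  | zero => simp [fibZ, lucasZ]
  | one => simp [fibZ, lucasZ]
  | more n h1 h2 =>
    have e1 : fibZ (n + 2) = fibZ (n + 1) + fibZ n := by rw [fibZ]
    have e2 : fibZ (n + 2 + 1) = fibZ (n + 2) + fibZ (n + 1) := by rw [fibZ]
    have e3 : n + 1 + 1 = n + 2 := rfl
    rw [lucasZ, h1, h2, e3, e2, e1]
    ring

def redM (c : ℤ) (x y : ℕ → ℤ) (n : ℕ) : Matrix (Fin (n + 1)) (Fin (n + 1)) ℤ :=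
  Matrix.of fun i j => if (i : ℕ) = 0 then x j else if (i : ℕ) = 1 then y j
    else if (j : ℕ) + 1 = i then c else 0

theorem det_redM (c : ℤ) (n : ℕ) : ∀ (x y : ℕ → ℤ),
    (redM c x y (n + 1)).det = (-c) ^ n * (x 0 * y (n + 1) - x (n + 1) * y 0) := by
  induction n with
  | zero => intro x y; simp [redM, Matrix.det_fin_two]
  | succ n ih =>
    intro x y
    rw [Matrix.det_succ_row _ (Fin.last _),
      Finset.sum_eq_single (⟨n + 1, by omega⟩ : Fin (n + 1 + 1 + 1))]
    · have hs : ((redM c x y (n + 1 + 1)).submatrix (Fin.last _).succAbove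
          (⟨n + 1, by omega⟩ : Fin (n + 1 + 1 + 1)).succAbove) =
          redM c (fun j => if j < n + 1 then x j else x (j + 1))
            (fun j => if j < n + 1 then y j else y (j + 1)) (n + 1) := by
        ext i j
        have hi := i.2
        have hj := j.2
        simp only [redM, Matrix.submatrix_apply, Matrix.of_apply, Fin.succAbove_last,
          Fin.val_castSucc, Fin.succAbove, Fin.lt_def]
        by_cases h : (j : ℕ) < n + 1
        · simp [h]
        · simp only [h, if_false, Fin.val_succ]
          split_ifs <;> first | rfl | omega
      rw [hs, ih]
      have hsg : (-1 : ℤ) ^ (n + 1 + 1 + (n + 1)) = -1 := by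
        apply Odd.neg_one_pow
        exact ⟨n + 1, by ring⟩
      simp [redM, hsg]
      ring
    · intro b _ hb
      have : ¬ ((b : ℕ) = n + 1) := fun h => hb (Fin.ext h)
      simp [redM, this]
    · simp

def opM (n : ℕ) : Matrix (Fin (n + 1)) (Fin (n + 1)) ℤ :=
  Matrix.of fun i k => if k = i then 1 else if 2 ≤ (i : ℕ) ∧ (k : ℕ) + 1 = i then 1
    else if (k : ℕ) + 2 = i then -1 else 0

theorem det_opM (n : ℕ) : (opM n).det = 1 := by
  rw [Matrix.det_of_lowerTriangular]
  · simp [opM]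
  · intro i j h
    have h' : (i : ℕ) < j := h
    simp only [opM, Matrix.of_apply, Fin.ext_iff]
    split_ifs <;> omega

theorem opM_mul (n : ℕ) (M : Matrix (Fin (n + 1)) (Fin (n + 1)) ℤ) (i j k1 k2 : Fin (n + 1))
    (h1 : (k1 : ℕ) + 1 = i) (h2 : (k2 : ℕ) + 2 = i) :
    (opM n * M) i j = M i j + M k1 j - M k2 j := by
  have : ∀ k, opM n i k = (if k = i then 1 else 0) + (if k = k1 then 1 else 0)
      - (if k = k2 then 1 else 0) := by
    intro k
    simp only [opM, Matrix.of_apply, Fin.ext_iff]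
    split_ifs <;> omega
  simp [Matrix.mul_apply, this, sub_mul, add_mul, Finset.sum_add_distrib]

theorem opM_mul_small (n : ℕ) (M : Matrix (Fin (n + 1)) (Fin (n + 1)) ℤ) (i j : Fin (n + 1))
    (h1 : (i : ℕ) < 2) :
    (opM n * M) i j = M i j := by
  have : ∀ k, opM n i k = (if k = i then 1 else 0) := by
    intro k
    simp only [opM, Matrix.of_apply, Fin.ext_iff]
    split_ifs <;> omega
  simp [Matrix.mul_apply, this]

theorem op_toeplitz (m n : ℕ) :
    opM (n + 1) * toeplitzM (fun i => (-1) ^ i * fibZ (m + i)) (fun i => fibZ (m + i)) (n + 1) =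
    redM (-lucasZ m) (fun j => fibZ (m + j))
      (fun j => if j = 0 then - fibZ (m + 1) else fibZ (m + j - 1)) (n + 1) := by
  ext i j
  by_cases hi : (i : ℕ) < 2
  · rw [opM_mul_small _ _ _ _ hi]
    simp only [redM, toeplitzM, Matrix.of_apply]
    obtain h | h : (i : ℕ) = 0 ∨ (i : ℕ) = 1 := by omega
    · rw [h]
      by_cases hj : (j : ℕ) = 0 <;> simp [hj]
    · rw [h]
      obtain hj | hj | hj : (j : ℕ) = 0 ∨ (j : ℕ) = 1 ∨ 2 ≤ (j : ℕ) := by omega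
      · simp [hj]
      · simp [hj]
      · rw [if_neg (by omega), if_neg (by omega), if_pos rfl, if_neg (by omega)]
        congr 1; omega
  · have hi2 := i.2
    rw [opM_mul _ _ i j ⟨i - 1, by omega⟩ ⟨i - 2, by omega⟩ (by simp; omega) (by simp; omega)]
    simp only [redM, toeplitzM, Matrix.of_apply]
    obtain ⟨a, ha⟩ : ∃ a, (i : ℕ) = a + 2 := ⟨i - 2, by omega⟩
    rw [ha]
    generalize (j : ℕ) = b
    rw [show a + 2 - 1 = a + 1 from rfl, show a + 2 - 2 = a from rfl,
      if_neg (show ¬ (a + 2 = 0) by omega), if_neg (show ¬ (a + 2 = 1) by omega)]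
    obtain h | h | h | h : b ≤ a ∨ b = a + 1 ∨ b = a + 2 ∨ a + 3 ≤ b := by omega
    · obtain ⟨d, rfl⟩ := Nat.exists_eq_add_of_le h
      rw [if_pos (by omega), if_pos (by omega), if_pos (by omega), if_neg (by omega),
        show b + d + 2 - b = d + 2 by omega, show b + d + 1 - b = d + 1 by omega,
        show b + d - b = d by omega, show m + (d + 2) = (m + d) + 2 by ring, fibZ,
        show m + (d + 1) = m + d + 1 by ring]
      ring
    · subst h
      rw [if_pos (by omega), if_pos (by omega), if_neg (by omega), if_pos (by omega),
        show a + 2 - (a + 1) = 1 by omega, show a + 1 - (a + 1) = 0 by omega,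
        show a + 1 - a = 1 by omega, lucasZ_eq]
      simp
      ring
    · subst h
      rw [if_pos (by omega), if_neg (by omega), if_neg (by omega), if_neg (by omega),
        show a + 2 - (a + 2) = 0 by omega, show a + 2 - (a + 1) = 1 by omega,
        show a + 2 - a = 2 by omega, fibZ]
      simp
      ring
    · obtain ⟨d, rfl⟩ := Nat.exists_eq_add_of_le h
      rw [if_neg (by omega), if_neg (by omega), if_neg (by omega), if_neg (by omega),
        show a + 3 + d - (a + 2) = d + 1 by omega, show a + 3 + d - (a + 1) = d + 2 by omega,
        show a + 3 + d - a = d + 3 by omega, show m + (d + 3) = (m + d + 1) + 2 by ring, fibZ]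
      rw [show m + (d + 1) = m + d + 1 by ring, show m + (d + 2) = m + d + 1 + 1 by ring]
      ring

/-- Corollary 3.2: for `α_i = F_{m+i}` and every `n ≥ 1`,
`det T_{α̃,α}(n) = L_m^(n-1) * F_{2m+n}`. -/
theorem det_toeplitz_fib_shift (m : ℕ) (n : ℕ) (hn : 1 ≤ n) :
    (toeplitzM (fun i => (-1) ^ i * fibZ (m + i)) (fun i => fibZ (m + i)) n).det =
      lucasZ m ^ (n - 1) * fibZ (2 * m + n) := by
  obtain ⟨n, rfl⟩ : ∃ k, n = k + 1 := ⟨n - 1, by omega⟩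
  have h := congrArg Matrix.det (op_toeplitz m n)
  rw [Matrix.det_mul, det_opM, one_mul, det_redM] at h
  rw [h]
  have hf : fibZ (2 * m + (n + 1)) = fibZ m * fibZ (m + n) + fibZ (m + 1) * fibZ (m + n + 1) := by
    simp only [fibZ_eq]
    rw [show 2 * m + (n + 1) = m + (m + n) + 1 by ring, Nat.fib_add]
    push_cast; ring
  rw [hf]
  simp [← add_assoc]
  ring_nf
  try simp
end

section
/- Let m ≥ 1 be an integer and let α be the sequence α_i = P_{m+i}, where P is the Pell sequence. Then for every n ≥ 1, det T_{α̃,α}(n) = (P_{m−1} + P_{m+1})^{n−1} · P_{2m+n}. Moreover, for m = 0 (so α = P), det T_{P̃,P}(n) = 2^{n−1}·P_n for every n ≥ 1. -/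
/-- The Pell sequence: `P 0 = 0`, `P 1 = 1`, `P n = 2 * P (n-1) + P (n-2)`. -/
def pellZ : ℕ → ℤ
  | 0 => 0
  | 1 => 1
  | n + 2 => 2 * pellZ (n + 1) + pellZ n

def hEnt (a : ℕ → ℤ) (i j : ℕ) : ℤ := if j ≤ i then (-1) ^ (i - j) * a (i - j) else a (j - i)

def gMat (a g : ℕ → ℤ) (n : ℕ) : Matrix (Fin (n + 1)) (Fin (n + 1)) ℤ :=
  Matrix.of fun i j => if (j : ℕ) = 0 then g i else hEnt a i j

lemma hEnt_succ (a : ℕ → ℤ) (i j : ℕ) : hEnt a (i + 1) (j + 1) = hEnt a i j := by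
  simp [hEnt]

lemma hEnt_rec (a : ℕ → ℤ) (ha : ∀ i, a (i + 2) = 2 * a (i + 1) + a i) (j : ℕ) :
    hEnt a 0 (j + 1) - 2 * hEnt a 1 (j + 1) - hEnt a 2 (j + 1)
      = if j = 0 then 2 * (a 1 - a 0) else 0 := by
  rcases j with _ | _ | j
  · simp [hEnt]; ring
  · have := ha 0
    simp [hEnt] at this ⊢; linarith
  · have := ha (j + 1)
    simp [hEnt, add_assoc] at this ⊢; linarith

lemma gMat_step (a g : ℕ → ℤ) (ha : ∀ i, a (i + 2) = 2 * a (i + 1) + a i)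
    (hg : ∀ i, g i = 2 * g (i + 1) + g (i + 2)) (n : ℕ) :
    (gMat a g (n + 2)).det
      = -(2 * (a 1 - a 0)) * (gMat a (fun i => g (i + 1)) (n + 1)).det := by
  have hm2 : 2 % (n + 2 + 1) = 2 := Nat.mod_eq_of_lt (by omega)
  have h1 := Matrix.det_updateRow_add_smul_self (gMat a g (n + 2)) (i := 0) (j := 1)
    (by simp) (-2)
  have h2 := Matrix.det_updateRow_add_smul_self (Matrix.updateRow (gMat a g (n + 2)) 0
    (gMat a g (n + 2) 0 + (-2 : ℤ) • gMat a g (n + 2) 1)) (i := 0) (j := 2)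
    (by simp [Fin.ext_iff, hm2]) (-1)
  rw [h1] at h2
  rw [← h2]
  have h20 : (2 : Fin (n + 2 + 1)) ≠ 0 := by simp [Fin.ext_iff, hm2]
  rw [Matrix.updateRow_idem, Matrix.updateRow_self, Matrix.updateRow_ne h20]
  have hrow : (gMat a g (n + 2) 0 + (-2 : ℤ) • gMat a g (n + 2) 1 + (-1 : ℤ) • gMat a g (n + 2) 2)
      = Pi.single (1 : Fin (n + 2 + 1)) (2 * (a 1 - a 0)) := by
    ext j
    refine Fin.cases ?_ (fun j => ?_) j
    · have := hg 0
      simp [gMat, hm2] at this ⊢; linarith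
    · have := hEnt_rec a ha j
      have e : (j.succ = (1 : Fin (n + 2 + 1))) ↔ (j : ℕ) = 0 := by
        rw [Fin.ext_iff, Fin.val_succ, Fin.val_one]; omega
      simp only [Pi.single_apply, e]
      rw [← this]
      simp [gMat, hm2]; ring
  rw [hrow, Matrix.det_succ_row_zero, Finset.sum_eq_single 1]
  · rw [Matrix.updateRow_self, Pi.single_eq_same]
    have : ((gMat a g (n + 2)).updateRow 0 (Pi.single 1 (2 * (a 1 - a 0)))).submatrix Fin.succ
        (Fin.succAbove 1) = gMat a (fun i => g (i + 1)) (n + 1) := by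
      ext i j
      rw [Matrix.submatrix_apply, Matrix.updateRow_ne (Fin.succ_ne_zero i)]
      refine Fin.cases ?_ (fun j => ?_) j
      · simp [gMat]
      · simp [gMat, hEnt_succ]
    rw [this]; simp
  · intro b _ hb
    rw [Matrix.updateRow_self, Pi.single_eq_of_ne hb]; simp
  · simp

lemma gMat_det (a : ℕ → ℤ) (ha : ∀ i, a (i + 2) = 2 * a (i + 1) + a i) (n : ℕ) :
    ∀ g : ℕ → ℤ, (∀ i, g i = 2 * g (i + 1) + g (i + 2)) →
    (gMat a g (n + 1)).det = (-(2 * (a 1 - a 0))) ^ n * (g n * a 0 - a 1 * g (n + 1)) := by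
  induction n with
  | zero =>
    intro g hg
    rw [Matrix.det_fin_two]
    simp [gMat, hEnt]
  | succ n ih =>
    intro g hg
    rw [gMat_step a g ha hg, ih _ (fun i => hg (i + 1))]
    ring

lemma toep_det (a : ℕ → ℤ) (ha : ∀ i, a (i + 2) = 2 * a (i + 1) + a i) (n : ℕ) :
    (toeplitzM (fun i => (-1) ^ i * a i) a (n + 1)).det
      = (2 * (a 1 - a 0)) ^ n * (a n * a 0 + a 1 * a (n + 1)) := by
  have : toeplitzM (fun i => (-1) ^ i * a i) a (n + 1)
      = gMat a (fun i => (-1) ^ i * a i) (n + 1) := by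
    ext i j
    simp only [toeplitzM, gMat, hEnt, Matrix.of_apply]
    by_cases h : (j : ℕ) = 0
    · simp [h]
    · rw [if_neg h]
  rw [this, gMat_det a ha n _ (fun i => by rw [ha i]; ring), neg_pow]
  have h : ((-1 : ℤ) ^ n) * (-1) ^ n = 1 := by rw [← mul_pow]; simp
  linear_combination ((2 * (a 1 - a 0)) ^ n * (a n * a 0 + a 1 * a (n + 1))) * h

lemma pell_add (m k : ℕ) :
    pellZ (m + k + 1) = pellZ k * pellZ m + pellZ (k + 1) * pellZ (m + 1) := by
  induction k using Nat.twoStepInduction with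
  | zero => simp [pellZ]
  | one => simp [pellZ]; ring
  | more k h1 h2 =>
    have e1 : pellZ (m + (k + 2) + 1) = 2 * pellZ (m + (k + 1) + 1) + pellZ (m + k + 1) := rfl
    have e2 : pellZ (k + 2) = 2 * pellZ (k + 1) + pellZ k := rfl
    have e3 : pellZ (k + 2 + 1) = 2 * pellZ (k + 1 + 1) + pellZ (k + 1) := rfl
    rw [e1, h1, h2, e3, e2]; ring

/-- Corollary 3.3: for `α_i = P_{m+i}` with `m ≥ 1` and every `n ≥ 1`,
`det T_{α̃,α}(n) = (P_{m-1} + P_{m+1})^(n-1) * P_{2m+n}`; and for `m = 0`,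
`det T_{P̃,P}(n) = 2^(n-1) * P_n`. -/
theorem det_toeplitz_pell_shift :
    (∀ m : ℕ, 1 ≤ m → ∀ n : ℕ, 1 ≤ n →
      (toeplitzM (fun i => (-1) ^ i * pellZ (m + i)) (fun i => pellZ (m + i)) n).det =
        (pellZ (m - 1) + pellZ (m + 1)) ^ (n - 1) * pellZ (2 * m + n)) ∧
    (∀ n : ℕ, 1 ≤ n →
      (toeplitzM (fun i => (-1) ^ i * pellZ i) pellZ n).det = 2 ^ (n - 1) * pellZ n) := by
  constructor
  · intro m hm n hn
    obtain ⟨n, rfl⟩ := Nat.exists_eq_add_of_le' hn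
    obtain ⟨m, rfl⟩ := Nat.exists_eq_add_of_le' hm
    rw [toep_det (fun i => pellZ (m + 1 + i)) (fun i => rfl)]
    have h := pell_add (m + 1) (m + 1 + n)
    have e : 2 * (m + 1) + (n + 1) = m + 1 + (m + 1 + n) + 1 := by ring
    have e2 : pellZ (m + 1 + 1) = 2 * pellZ (m + 1) + pellZ m := rfl
    have e3 : 2 * (pellZ (m + 1 + 1) - pellZ (m + 1)) = pellZ m + pellZ (m + 1 + 1) := by
      rw [e2]; ring
    rw [e, h]
    simp only [Nat.add_sub_cancel, add_zero, e3]
    rw [← add_assoc (m + 1) n 1]; ring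
  · intro n hn
    obtain ⟨n, rfl⟩ := Nat.exists_eq_add_of_le' hn
    rw [toep_det pellZ (fun i => rfl)]
    simp [pellZ]
end

section
/- Let α be the sequence α_i = F_{i+1}, let α̃_i = (−1)^i·α_i, and let α̌ and (α̃)̌ denote the binomial transforms of α and α̃ respectively. Then for every n ≥ 0, det P_{(α̃)̌, α̌}(n) = F_{n+2} and det P_{α̌, (α̃)̌}(n) = F_{n+2}. -/
/-- The binomial transform: `α̌_i = Σ_{k=0}^{i} C(i,k) * α_k`. -/
def btrans (α : ℕ → ℤ) (i : ℕ) : ℤ :=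
  ∑ k ∈ Finset.range (i + 1), (i.choose k : ℤ) * α k

/-- Entry of the generalized Pascal triangle `P_{α,β}`:
`P (i,0) = α i`, `P (0,j) = β j`, and `P (i,j) = P (i,j-1) + P (i-1,j)` for `i,j ≥ 1`
(consistent when `α 0 = β 0`). -/
def pascalEntry (α β : ℕ → ℤ) : ℕ → ℕ → ℤ
  | i, 0 => α i
  | 0, j + 1 => β (j + 1)
  | i + 1, j + 1 => pascalEntry α β (i + 1) j + pascalEntry α β i (j + 1)
  termination_by i j => i + j

/-- The generalized Pascal triangle `P_{α,β}(n)` of order `n+1`. -/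
def pascalM (α β : ℕ → ℤ) (n : ℕ) : Matrix (Fin (n + 1)) (Fin (n + 1)) ℤ :=
  Matrix.of fun i j => pascalEntry α β (i : ℕ) (j : ℕ)

def toep (α β : ℕ → ℤ) (i j : ℕ) : ℤ := if i ≤ j then β (j - i) else α (i - j)

theorem toep_succ (α β : ℕ → ℤ) (i j : ℕ) : toep α β (i+1) (j+1) = toep α β i j := by
  simp [toep]

theorem btrans_succ (f : ℕ → ℤ) (i : ℕ) :
    btrans f (i+1) = btrans f i + btrans (fun k => f (k+1)) i := by
  unfold btrans
  rw [Finset.sum_range_succ' _ (i+1)]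
  simp only [Nat.choose_succ_succ', Nat.cast_add, add_mul, Finset.sum_add_distrib]
  rw [Finset.sum_range_succ (fun k => ((i.choose (k+1) : ℕ) : ℤ) * f (k+1)) i,
    Finset.sum_range_succ' (fun k => ((i.choose k : ℕ) : ℤ) * f k) i]
  simp
  ring

theorem btrans_zero (f : ℕ → ℤ) : btrans f 0 = f 0 := by simp [btrans]

theorem btrans_add (f g : ℕ → ℤ) (i : ℕ) :
    btrans (fun k => f k + g k) i = btrans f i + btrans g i := by
  simp [btrans, mul_add, Finset.sum_add_distrib]

theorem btrans_ext (f : ℕ → ℤ) (i n : ℕ) (h : i ≤ n) :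
    btrans f i = ∑ k ∈ Finset.range (n+1), (i.choose k : ℤ) * f k := by
  unfold btrans
  apply Finset.sum_subset
  · intro x; simp; omega
  · intro x _ hx
    rw [Nat.choose_eq_zero_of_lt (by simpa using hx)]; simp

def QQ (T : ℕ → ℕ → ℤ) (i j : ℕ) : ℤ := btrans (fun k => btrans (T k) j) i

theorem entry_eq (α β : ℕ → ℤ) (h : α 0 = β 0) (i j : ℕ) :
    pascalEntry (btrans α) (btrans β) i j = QQ (toep α β) i j := by
  induction i, j using pascalEntry.induct with
  | case1 i =>
    rw [pascalEntry]
    unfold QQ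
    congr 1
    funext k
    rw [btrans_zero]
    rcases k with _ | k <;> simp [toep, h]
  | case2 j =>
    rw [pascalEntry]
    unfold QQ
    rw [btrans_zero]
    congr 1
  | case3 i j h1 h2 =>
    rw [pascalEntry, h1, h2]
    unfold QQ
    simp only [btrans_succ, btrans_add, toep_succ]
    ring

theorem entry_symm (α β : ℕ → ℤ) (h : α 0 = β 0) (i j : ℕ) :
    pascalEntry α β i j = pascalEntry β α j i := by
  induction i, j using pascalEntry.induct with
  | case1 i => rcases i with _ | i <;> simp [pascalEntry, h]
  | case2 j => simp [pascalEntry]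
  | case3 i j h1 h2 =>
    rw [pascalEntry, h1, h2, pascalEntry, add_comm]

def LL (n : ℕ) : Matrix (Fin (n+1)) (Fin (n+1)) ℤ := Matrix.of fun i k => ((i:ℕ).choose k : ℤ)

theorem det_LL (n : ℕ) : (LL n).det = 1 := by
  rw [Matrix.det_of_isLowerTriangular]
  · simp [LL]
  · intro i j hij
    have : i < j := by simpa using hij
    simp only [LL, Matrix.of_apply]
    rw [Nat.choose_eq_zero_of_lt (by exact_mod_cast this)]; simp

def TT (α β : ℕ → ℤ) (n : ℕ) : Matrix (Fin (n+1)) (Fin (n+1)) ℤ :=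
  Matrix.of fun i j => toep α β i j

theorem det_eq (α β : ℕ → ℤ) (h : α 0 = β 0) (n : ℕ) :
    (pascalM (btrans α) (btrans β) n).det = (TT α β n).det := by
  have : pascalM (btrans α) (btrans β) n = LL n * (TT α β n * (LL n).transpose) := by
    ext i j
    simp only [pascalM, Matrix.of_apply, Matrix.mul_apply, Matrix.transpose_apply, LL, TT]
    rw [entry_eq α β h]
    unfold QQ
    rw [btrans_ext _ _ n (by omega), Finset.sum_range]
    refine Finset.sum_congr rfl fun k _ => ?_
    rw [btrans_ext _ _ n (by omega), Finset.sum_range]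
    congr 1
    refine Finset.sum_congr rfl fun l _ => ?_
    ring
  rw [this]
  simp [Matrix.det_mul, det_LL]

def UU (n : ℕ) : Matrix (Fin (n+1)) (Fin (n+1)) ℤ :=
  Matrix.of fun k j => (if (k:ℕ) = j then 1 else 0) - (if (k:ℕ) + 1 = j then 1 else 0)
    - (if (k:ℕ) + 2 = j then 1 else 0)

theorem det_UU (n : ℕ) : (UU n).det = 1 := by
  rw [Matrix.det_of_isUpperTriangular]
  · simp [UU]
  · intro i j hij
    have : j < i := by simpa using hij
    have : (j:ℕ) < i := by exact_mod_cast this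
    simp only [UU, Matrix.of_apply]
    rw [if_neg (by omega), if_neg (by omega), if_neg (by omega)]; simp

theorem sum_delta (f : ℕ → ℤ) (a N : ℕ) (h : a < N) :
    ∑ k : Fin N, f k * (if (k:ℕ) = a then 1 else 0) = f a := by
  rw [Fin.sum_univ_eq_sum_range (fun k => f k * (if k = a then 1 else 0)) N]
  simp [h]

theorem TU (α β : ℕ → ℤ) (n : ℕ) (i j : Fin (n+1)) : (TT α β n * UU n) i j =
    toep α β i j - (if 1 ≤ (j:ℕ) then toep α β i (j-1) else 0)
      - (if 2 ≤ (j:ℕ) then toep α β i (j-2) else 0) := by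
  simp only [Matrix.mul_apply, TT, UU, Matrix.of_apply, mul_sub, Finset.sum_sub_distrib]
  congr 1
  · congr 1
    · exact sum_delta (toep α β i) j _ j.2
    · split_ifs with h
      · rw [← sum_delta (toep α β i) (j-1) (n+1) (by omega)]
        refine Finset.sum_congr rfl fun k _ => ?_
        congr 2
        apply propext; omega
      · apply Finset.sum_eq_zero
        intro k _
        rw [if_neg (by omega), mul_zero]
  · split_ifs with h
    · rw [← sum_delta (toep α β i) (j-2) (n+1) (by omega)]
      refine Finset.sum_congr rfl fun k _ => ?_
      congr 2
      apply propext; omega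
    · apply Finset.sum_eq_zero
      intro k _
      rw [if_neg (by omega), mul_zero]

theorem fibZ_add_two (n : ℕ) : fibZ (n+2) = fibZ (n+1) + fibZ n := by rw [fibZ]

theorem toep_rec (i j : ℕ) :
    toep (fun i => (-1) ^ i * fibZ (i + 1)) (fun i => fibZ (i + 1)) i (j+2)
    - toep (fun i => (-1) ^ i * fibZ (i + 1)) (fun i => fibZ (i + 1)) i (j+1)
    - toep (fun i => (-1) ^ i * fibZ (i + 1)) (fun i => fibZ (i + 1)) i j
    = if i = j + 1 then 1 else 0 := by
  unfold toep
  rcases lt_trichotomy i (j+1) with h | h | h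
  · obtain ⟨d, rfl⟩ : ∃ d, j = i + d := ⟨j - i, by omega⟩
    rw [if_pos (by omega), if_pos (by omega), if_pos (by omega), if_neg (by omega),
      show i + d + 2 - i = d + 2 by omega, show i + d + 1 - i = d + 1 by omega,
      show i + d - i = d by omega]
    have := fibZ_add_two (d+1)
    simp only
    linarith
  · subst h
    simp [fibZ]
  · obtain ⟨d, rfl⟩ : ∃ d, i = j + 2 + d := ⟨i - (j+2), by omega⟩
    rw [if_neg (c := j + 2 + d ≤ j + 1) (by omega), if_neg (c := j + 2 + d ≤ j) (by omega),
      if_neg (c := j + 2 + d = j + 1) (by omega),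
      show j + 2 + d - (j+1) = d + 1 by omega, show j + 2 + d - j = d + 2 by omega]
    have h1 := fibZ_add_two (d+1)
    have h2 : (if j + 2 + d ≤ j + 2 then fibZ (j + 2 - (j + 2 + d) + 1)
        else (-1) ^ (j + 2 + d - (j+2)) * fibZ (j + 2 + d - (j+2) + 1))
        = (-1)^d * fibZ (d+1) := by
      rcases d with _ | d
      · simp
      · rw [if_neg (by omega), show j + 2 + (d+1) - (j+2) = d + 1 by omega]
    simp only at h2 ⊢
    rw [h2, h1]
    ring

theorem det_TT (n : ℕ) :
    (TT (fun i => (-1) ^ i * fibZ (i + 1)) (fun i => fibZ (i + 1)) n).det = fibZ (n+2) := by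
  rcases n with _ | m
  · simp [TT, toep, fibZ]
  set T := TT (fun i => (-1) ^ i * fibZ (i + 1)) (fun i => fibZ (i + 1)) (m+1) with hT
  have h0 : T.det = (T * UU (m+1)).det := by rw [Matrix.det_mul, det_UU, mul_one]
  have hc1 : ∀ i : Fin (m+1), (T * UU (m+1)) i.succ 1 = (-1)^(i:ℕ) * fibZ (i+3) := by
    intro i
    rw [hT, TU]
    have h1 := fibZ_add_two (i+1)
    rcases i with ⟨_ | i, hi⟩
    · simp [toep, fibZ]
    · simp [toep] at h1 ⊢
      rw [h1]; ring
  have hc2 : ∀ (i : Fin (m+2)) (j : Fin m), (T * UU (m+1)) i j.succ.succ =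
      if (i:ℕ) = j + 1 then 1 else 0 := by
    intro i j
    rw [hT, TU, ← toep_rec]
    simp
  have h00 : (T * UU (m+1)) 0 0 = 1 := by
    rw [hT, TU]; simp [toep, fibZ]
  have h01 : (T * UU (m+1)) 0 1 = 0 := by
    rw [hT, TU]; simp [toep, fibZ]
  rw [h0]
  generalize T * UU (m+1) = M at *
  rw [Matrix.det_succ_row_zero, Finset.sum_eq_single 0]
  rotate_left
  · intro j _ hj
    obtain ⟨j, rfl⟩ := Fin.exists_succ_eq.mpr hj
    have : M 0 j.succ = 0 := by
      refine Fin.cases ?_ (fun j => ?_) j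
      · exact h01
      · rw [hc2]; simp
    rw [this]; simp
  · simp
  rw [h00, Matrix.det_succ_row _ (Fin.last m), Finset.sum_eq_single 0]
  rotate_left
  · intro j _ hj
    have hm : m ≠ 0 := by
      rintro rfl
      exact hj (Subsingleton.elim _ _)
    have : M (Fin.last m).succ j.succ = 0 := by
      revert hj
      refine Fin.cases ?_ (fun j => ?_) j
      · simp
      · intro _
        rw [hc2, if_neg]
        have := j.2
        simp; omega
    simp only [Matrix.submatrix_apply, Fin.succAbove_zero]
    rw [this]; simp
  · simp
  have hI : ((M.submatrix Fin.succ (Fin.succAbove 0)).submatrix (Fin.last m).succAbove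
      (Fin.succAbove 0)) = 1 := by
    ext i j
    simp only [Matrix.submatrix_apply, Fin.succAbove_zero, Fin.succAbove_last]
    rw [hc2, Matrix.one_apply]
    congr 1
    simp [Fin.ext_iff]
  rw [hI]
  have := hc1 (Fin.last m)
  simp only [Matrix.submatrix_apply, Fin.succAbove_zero, Fin.succ_zero_eq_one, this]
  simp [← mul_assoc, ← mul_pow]

theorem det_pascal_fib_succ (n : ℕ) :
    (pascalM (btrans fun i => (-1) ^ i * fibZ (i + 1)) (btrans fun i => fibZ (i + 1)) n).det =
      fibZ (n + 2) ∧
    (pascalM (btrans fun i => fibZ (i + 1)) (btrans fun i => (-1) ^ i * fibZ (i + 1)) n).det =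
      fibZ (n + 2) := by
  have h1 : (pascalM (btrans fun i => (-1) ^ i * fibZ (i + 1))
      (btrans fun i => fibZ (i + 1)) n).det = fibZ (n + 2) := by
    rw [det_eq _ _ (by simp), det_TT]
  refine ⟨h1, ?_⟩
  rw [← h1, ← Matrix.det_transpose]
  congr 1
  ext i j
  simp only [pascalM, Matrix.transpose_apply, Matrix.of_apply]
  exact entry_symm _ _ (by simp [btrans_zero]) _ _
end

section
/- Let c be a complex number, φ = (1+√5)/2, Φ = (1−√5)/2, and let (a,b) = (c − φ, c − Φ) or (a,b) = (c − Φ, c − φ). Then for every positive integer n, det T_n(a,b,c) = c·F_n + F_{n−1}. -/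
/-- `T_n(a,b,c)`: the `n × n` Toeplitz matrix with diagonal entries `c`, entries strictly
above the diagonal `a`, and entries strictly below the diagonal `b`. -/
def toeplitz3 (a b c : ℂ) (n : ℕ) : Matrix (Fin n) (Fin n) ℂ :=
  Matrix.of fun i j => if (i : ℕ) = (j : ℕ) then c else if (i : ℕ) < (j : ℕ) then a else b

/-- The golden ratio `φ = (1 + √5)/2` as a complex number. -/
noncomputable def phiC : ℂ := (1 + (Real.sqrt 5 : ℂ)) / 2

/-- The golden ratio conjugate `Φ = (1 - √5)/2` as a complex number. -/
noncomputable def PhiC : ℂ := (1 - (Real.sqrt 5 : ℂ)) / 2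

theorem toeplitz3_rec (a b c : ℂ) (n : ℕ) :
    (toeplitz3 a b c (n+2)).det = (2*c-a-b) * (toeplitz3 a b c (n+1)).det
      - (c-a)*(c-b) * (toeplitz3 a b c n).det := by
  have h01 : (0 : Fin (n+2)) ≠ 1 := by simp
  rw [← Matrix.det_updateRow_add_smul_self (toeplitz3 a b c (n+2)) h01 (-1)]
  rw [← Matrix.det_updateCol_add_smul_self _ h01 (-1)]
  generalize hM' : Matrix.updateCol (_ : Matrix (Fin (n+2)) (Fin (n+2)) ℂ) _ _ = M
  have hM := hM'.symm
  clear hM'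
  have m00 : M 0 0 = 2*c-a-b := by
    simp [hM, toeplitz3, Matrix.updateCol_apply, Matrix.updateRow_apply]; ring
  have m01 : M 0 1 = a - c := by
    simp [hM, toeplitz3, Matrix.updateCol_apply, Matrix.updateRow_apply]; ring
  have m0 : ∀ j : Fin n, M 0 j.succ.succ = 0 := by
    intro j
    have hj : (1 : Fin (n+2)) < j.succ.succ := by simp [Fin.lt_def]
    simp [hj, hM, toeplitz3, Matrix.updateCol_apply, Matrix.updateRow_apply]
  have m10 : M 1 0 = b - c := by
    simp [hM, toeplitz3, Matrix.updateCol_apply, Matrix.updateRow_apply]; ring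
  have mc : ∀ j : Fin n, M j.succ.succ 0 = 0 := by
    intro j
    simp [hM, toeplitz3, Matrix.updateCol_apply, Matrix.updateRow_apply]
  have ms : ∀ i j : Fin (n+1), M i.succ j.succ = toeplitz3 a b c (n+1) i j := by
    intro i j
    simp [hM, toeplitz3, Matrix.updateCol_apply, Matrix.updateRow_apply]
  have s1 : M.submatrix Fin.succ (Fin.succAbove 0) = toeplitz3 a b c (n+1) := by
    ext i j; simp [ms]
  have s2 : (M.submatrix Fin.succ (Fin.succAbove 1)).det
      = (b - c) * (toeplitz3 a b c n).det := by
    have t : (M.submatrix Fin.succ (Fin.succAbove 1)).submatrix (Fin.succAbove 0) Fin.succ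
        = toeplitz3 a b c n := by
      ext i j
      have : Fin.succAbove (1 : Fin (n+2)) j.succ = j.succ.succ := by
        simp [Fin.succAbove, Fin.lt_def]
      rw [Matrix.submatrix_apply, Matrix.submatrix_apply, this, ms]
      simp [toeplitz3]
    have z : Fin.succAbove (1 : Fin (n+2)) 0 = 0 := by simp
    rw [Matrix.det_succ_column_zero, Fin.sum_univ_succ, t]
    simp only [Matrix.submatrix_apply, z, mc]
    simp [m10]
  rw [Matrix.det_succ_row_zero, Fin.sum_univ_succ, Fin.sum_univ_succ, s1]
  simp only [m0]
  simp [m00, m01, s2]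
  ring

theorem det_toeplitz3_golden (a b c : ℂ)
    (h : (a = c - phiC ∧ b = c - PhiC) ∨ (a = c - PhiC ∧ b = c - phiC)) :
    ∀ n : ℕ, 1 ≤ n →
      (toeplitz3 a b c n).det = c * (fibZ n : ℂ) + (fibZ (n - 1) : ℂ) := by
  have h5 : (Real.sqrt 5 : ℂ) ^ 2 = 5 := by
    rw [← Complex.ofReal_pow, Real.sq_sqrt (by norm_num)]; norm_num
  have hs : 2*c-a-b = 1 := by
    rcases h with ⟨rfl, rfl⟩ | ⟨rfl, rfl⟩ <;> unfold phiC PhiC <;> ring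
  have hp : (c-a)*(c-b) = -1 := by
    rcases h with ⟨rfl, rfl⟩ | ⟨rfl, rfl⟩ <;> unfold phiC PhiC <;> linear_combination (-1/4) * h5
  have r : ∀ n, (toeplitz3 a b c (n+2)).det
      = (toeplitz3 a b c (n+1)).det + (toeplitz3 a b c n).det := by
    intro n; rw [toeplitz3_rec, hs, hp]; ring
  have d0 : (toeplitz3 a b c 0).det = 1 := by simp
  have d1 : (toeplitz3 a b c 1).det = c := by simp [toeplitz3]
  have key : ∀ n : ℕ, (toeplitz3 a b c (n+1)).det = c * (fibZ (n+1) : ℂ) + (fibZ n : ℂ) ∧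
      (toeplitz3 a b c (n+2)).det = c * (fibZ (n+2) : ℂ) + (fibZ (n+1) : ℂ) := by
    intro n
    induction n with
    | zero => rw [r, d0, d1]; simp [d1, fibZ]
    | succ k ih =>
      refine ⟨ih.2, ?_⟩
      rw [r, ih.1, ih.2]
      have e1 : fibZ (k+1+2) = fibZ (k+2) + fibZ (k+1) := by rw [fibZ]
      have e2 : fibZ (k+1+1) = fibZ (k+1) + fibZ k := by rw [fibZ]
      rw [e1, e2]
      push_cast; ring
  intro n hn
  obtain ⟨k, rfl⟩ : ∃ k, n = k + 1 := ⟨n - 1, by omega⟩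
  simpa using (key k).1
end

section
/- Let c be a complex number and let (a,b) = (c − 1 + √2, c − 1 − √2) or (a,b) = (c − 1 − √2, c − 1 + √2). Then for every positive integer n, det T_n(a,b,c) = c·P_n + P_{n−1}, where P is the Pell sequence. -/
theorem det_aux {n : ℕ} (B : Matrix (Fin (n+2)) (Fin (n+2)) ℂ)
    (h1 : ∀ j : Fin n, B 0 j.succ.succ = 0) (h2 : ∀ j : Fin n, B j.succ.succ 0 = 0) :
    B.det = B 0 0 * (B.submatrix Fin.succ Fin.succ).det
      - B 0 1 * B 1 0 * (B.submatrix (fun i : Fin n => i.succ.succ)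
          (fun i : Fin n => i.succ.succ)).det := by
  have key : (B.submatrix Fin.succ (Fin.succAbove 1)).det = B 1 0 *
      (B.submatrix (fun i : Fin n => i.succ.succ) (fun i : Fin n => i.succ.succ)).det := by
    rw [Matrix.det_succ_column_zero, Fin.sum_univ_succ]
    have : ∀ i : Fin n, (B.submatrix Fin.succ (Fin.succAbove 1)) i.succ 0 = 0 := by
      intro i
      simpa using h2 i
    simp only [this]
    simp [Matrix.submatrix_submatrix]
    left
    congr 1
  rw [Matrix.det_succ_row_zero, Fin.sum_univ_succ, Fin.sum_univ_succ]
  simp only [h1]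
  have e : (Fin.succ (0 : Fin (n+1))) = 1 := rfl
  rw [e, key]
  simp
  ring

/-- If `(a,b) = (c - 1 + √2, c - 1 - √2)` or `(a,b) = (c - 1 - √2, c - 1 + √2)`, then for
every `n ≥ 1`, `det T_n(a,b,c) = c * P_n + P_{n-1}`. -/
theorem det_toeplitz3_pell (a b c : ℂ)
    (h : (a = c - 1 + (Real.sqrt 2 : ℂ) ∧ b = c - 1 - (Real.sqrt 2 : ℂ)) ∨
         (a = c - 1 - (Real.sqrt 2 : ℂ) ∧ b = c - 1 + (Real.sqrt 2 : ℂ))) :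
    ∀ n : ℕ, 1 ≤ n →
      (toeplitz3 a b c n).det = c * (pellZ n : ℂ) + (pellZ (n - 1) : ℂ) := by
  have hs : ((Real.sqrt 2 : ℝ) : ℂ) ^ 2 = 2 := by
    rw [← Complex.ofReal_pow, Real.sq_sqrt (by norm_num)]; norm_num
  have hr : ∀ n, (toeplitz3 a b c (n+2)).det
      = 2 * (toeplitz3 a b c (n+1)).det + (toeplitz3 a b c n).det := by
    intro n
    have hsum : 2*c-a-b = 2 := by
      rcases h with ⟨rfl, rfl⟩ | ⟨rfl, rfl⟩ <;> ring
    have hprod : (c-a)*(c-b) = -1 := by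
      rcases h with ⟨rfl, rfl⟩ | ⟨rfl, rfl⟩ <;> linear_combination -hs
    rw [toeplitz3_rec, hsum, hprod]; ring
  have h0 : (toeplitz3 a b c 0).det = 1 := by simp
  have h1 : (toeplitz3 a b c 1).det = c := by simp [toeplitz3]
  have main : ∀ n, (toeplitz3 a b c (n+1)).det = c * (pellZ (n+1) : ℂ) + (pellZ n : ℂ) ∧
      (toeplitz3 a b c (n+2)).det = c * (pellZ (n+2) : ℂ) + (pellZ (n+1) : ℂ) := by
    intro n
    induction n with
    | zero =>
      refine ⟨by simp [toeplitz3, pellZ], ?_⟩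
      rw [hr, h0, h1]; simp [pellZ]; ring
    | succ k ih =>
      refine ⟨ih.2, ?_⟩
      have p1 : pellZ (k+3) = 2 * pellZ (k+2) + pellZ (k+1) := rfl
      have p2 : pellZ (k+2) = 2 * pellZ (k+1) + pellZ k := rfl
      have := hr (k+1)
      rw [show k+1+2 = k+3 from rfl, show k+1+1 = k+2 from rfl] at *
      rw [this, ih.1, ih.2, p1]
      push_cast [p2]
      ring
  intro n hn
  obtain ⟨m, rfl⟩ : ∃ m, n = m+1 := ⟨n-1, by omega⟩
  exact (main m).1
end

section
/- Let α and β be the integer sequences α_i = 2^{i+1} − 1 and β_i = 2 − 2^i (so α_0 = β_0 = 1). Then for every n ≥ 0, det P_{α,β}(n) = J_{n+2}. -/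
/-- The Jacobsthal sequence: `J 0 = 0`, `J 1 = 1`, `J n = J (n-1) + 2 * J (n-2)`. -/
def jacobsthalZ : ℕ → ℤ
  | 0 => 0
  | 1 => 1
  | n + 2 => jacobsthalZ (n + 1) + 2 * jacobsthalZ n

namespace PJ

def S (f : ℕ → ℤ) (i : ℕ) : ℤ := ∑ k ∈ Finset.range (i + 1), (i.choose k : ℤ) * f k

theorem S_ext (f : ℕ → ℤ) (i N : ℕ) (h : i < N) :
    ∑ k : Fin N, (i.choose (k : ℕ) : ℤ) * f k = S f i := by
  rw [Fin.sum_univ_eq_sum_range (fun k => (i.choose k : ℤ) * f k) N, S]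
  symm
  apply Finset.sum_subset
  · intro x hx
    simp only [Finset.mem_range] at *
    omega
  · intro x _ hx
    simp only [Finset.mem_range] at hx
    rw [Nat.choose_eq_zero_of_lt (by omega)]
    simp

theorem S_succ (f : ℕ → ℤ) (i : ℕ) : S f (i + 1) = S f i + S (fun k => f (k + 1)) i := by
  have h1 : S f i = ∑ k ∈ Finset.range (i + 2), (i.choose k : ℤ) * f k := by
    rw [Finset.sum_range_succ, S, Nat.choose_eq_zero_of_lt (by omega)]
    simp
  rw [h1]
  unfold S
  rw [Finset.sum_range_succ' _ (i + 1), Finset.sum_range_succ' _ (i + 1)]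
  simp only [Nat.choose_succ_succ, Nat.cast_add, add_mul, Finset.sum_add_distrib]
  simp
  ring

theorem S_add (f g : ℕ → ℤ) (i : ℕ) : S (fun k => f k + g k) i = S f i + S g i := by
  simp [S, mul_add, Finset.sum_add_distrib]

theorem S_zero (f : ℕ → ℤ) : S f 0 = f 0 := by simp [S]

theorem S_const (c : ℤ) (i : ℕ) : S (fun _ => c) i = c * 2 ^ i := by
  induction i with
  | zero => simp [S]
  | succ i ih => rw [S_succ, ih]; ring

def t (i j : ℕ) : ℤ := if i = j then 1 else if j < i then 2 else -1

theorem t_succ (i j : ℕ) : t (i + 1) (j + 1) = t i j := by simp [t]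

def Q (i j : ℕ) : ℤ := S (fun l => t i l) j

theorem Q_succ (i j : ℕ) : Q (i + 1) (j + 1) = Q (i + 1) j + Q i j := by
  simp only [Q, S_succ, t_succ]

theorem entry (i j : ℕ) :
    pascalEntry (fun i => 2 ^ (i + 1) - 1) (fun i => 2 - 2 ^ i) i j
      = S (fun k => Q k j) i := by
  induction j generalizing i with
  | zero =>
    rw [pascalEntry]
    simp only [Q, S_zero]
    induction i with
    | zero => simp [S, t]
    | succ i ih =>
      rw [S_succ, ← ih]
      have : (fun k => t (k + 1) 0) = fun _ => (2 : ℤ) := by funext k; simp [t]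
      rw [this, S_const]; ring
  | succ j ihj =>
    induction i with
    | zero =>
      rw [pascalEntry, S_zero]
      generalize j + 1 = m
      induction m with
      | zero => simp [Q, S, t]
      | succ m ih =>
        rw [Q, S_succ, ← Q, ← ih]
        have : (fun k => t 0 (k + 1)) = fun _ => (-1 : ℤ) := by funext k; simp [t]
        rw [this, S_const]; ring
    | succ i ih =>
      rw [pascalEntry, ihj, ih, S_succ _ i, S_succ _ i]
      simp only [Q_succ, S_add]
      ring

def r (a : ℤ) (i j : ℕ) : ℤ :=
  if i = 0 then (if j = 0 then a else -1) else if i = j then 2 else if i = j + 1 then 1 else 0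

def R (a : ℤ) (n : ℕ) : Matrix (Fin n) (Fin n) ℤ := Matrix.of fun i j => r a i j

theorem R_rec (a : ℤ) (n : ℕ) : (R a (n + 2)).det = a * 2 ^ (n + 1) - (R (-1) (n + 1)).det := by
  rw [Matrix.det_succ_column_zero, Fin.sum_univ_succ, Fin.sum_univ_succ, Finset.sum_eq_zero]
  · have h1 : ((R a (n + 2)).submatrix (Fin.succAbove 0) Fin.succ).det = 2 ^ (n + 1) := by
      rw [Matrix.det_of_lowerTriangular]
      · simp [R, r]
      · intro i j hij
        have : (i : ℕ) < j := by simpa using hij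
        simp [R, r]
        omega
    have h2 : (R a (n + 2)).submatrix (Fin.succAbove (Fin.succ 0)) Fin.succ = R (-1) (n + 1) := by
      ext i j
      refine Fin.cases ?_ (fun i => ?_) i
      · simp [R, r]
      · simp [R, r]
    rw [h1, h2]
    simp [R, r]
    ring
  · intro i _
    simp [R, r]

theorem R_neg (n : ℕ) : (R (-1) (n + 1)).det = - jacobsthalZ (n + 1) ∧
    jacobsthalZ (n + 2) = 2 ^ (n + 1) - jacobsthalZ (n + 1) := by
  induction n with
  | zero => simp [R, r, jacobsthalZ]
  | succ n ih =>
    obtain ⟨h1, h2⟩ := ih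
    have h3 : jacobsthalZ (n + 3) = jacobsthalZ (n + 2) + 2 * jacobsthalZ (n + 1) := by
      rw [jacobsthalZ]
    refine ⟨?_, ?_⟩
    · rw [R_rec, h1, h2]; ring
    · show jacobsthalZ (n + 3) = 2 ^ (n + 2) - jacobsthalZ (n + 2)
      rw [h3, h2]; ring

theorem R_one (n : ℕ) : (R 1 (n + 1)).det = jacobsthalZ (n + 2) := by
  cases n with
  | zero => simp [R, r, jacobsthalZ]
  | succ n =>
    obtain ⟨h1, h2⟩ := R_neg n
    have h3 : jacobsthalZ (n + 3) = jacobsthalZ (n + 2) + 2 * jacobsthalZ (n + 1) := by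
      rw [jacobsthalZ]
    rw [R_rec, h1]
    show _ = jacobsthalZ (n + 3)
    rw [h3, h2]; ring

def T (n : ℕ) : Matrix (Fin n) (Fin n) ℤ := Matrix.of fun i j => t i j

def L (n : ℕ) : Matrix (Fin n) (Fin n) ℤ := Matrix.of fun i j => ((i : ℕ).choose j : ℤ)

theorem T_det (n : ℕ) : (T (n + 1)).det = (R 1 (n + 1)).det := by
  apply Matrix.det_eq_of_forall_row_eq_smul_add_pred (fun _ => 1)
  · intro j
    simp only [T, R, t, r, Matrix.of_apply, Fin.val_zero]
    split_ifs <;> omega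
  · intro i j
    simp only [T, R, t, r, Matrix.of_apply, Fin.val_succ, Fin.val_castSucc, one_mul]
    split_ifs <;> first | contradiction | omega

theorem L_det (n : ℕ) : (L n).det = 1 := by
  rw [Matrix.det_of_lowerTriangular]
  · simp [L]
  · intro i j hij
    have : (i : ℕ) < j := by simpa using hij
    simp [L, Nat.choose_eq_zero_of_lt this]

theorem fact (n : ℕ) : pascalM (fun i => 2 ^ (i + 1) - 1) (fun i => 2 - 2 ^ i) n
    = L (n + 1) * (T (n + 1) * (L (n + 1)).transpose) := by
  ext i j
  have h : ∀ k : Fin (n + 1), (T (n + 1) * (L (n + 1)).transpose) k j = Q k j := by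
    intro k
    rw [Matrix.mul_apply, Q, ← S_ext _ _ (n + 1) j.2]
    exact Finset.sum_congr rfl fun l _ => by simp [T, L, mul_comm]
  rw [Matrix.mul_apply]
  simp only [h]
  rw [pascalM, Matrix.of_apply, entry, ← S_ext _ _ (n + 1) i.2]
  rfl

end PJ

/-- Corollary 3.8 (1): for `α_i = 2^(i+1) - 1` and `β_i = 2 - 2^i`,
`det P_{α,β}(n) = J_{n+2}` for every `n ≥ 0`. -/
theorem det_pascal_jacobsthal (n : ℕ) :
    (pascalM (fun i => 2 ^ (i + 1) - 1) (fun i => 2 - 2 ^ i) n).det =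
      jacobsthalZ (n + 2) := by
  rw [PJ.fact, Matrix.det_mul, Matrix.det_mul, Matrix.det_transpose, PJ.L_det, PJ.T_det, PJ.R_one]
  ring
end

section
/- Let α and β be the integer sequences α_i = 2^{i+2} − 1 and β_i = 2^i + 2 (so α_0 = β_0 = 3). Then for every n ≥ 0, det P_{α,β}(n) = J_{n+3}. -/
/-- Toeplitz entry. -/
def toepE (i j : ℕ) : ℤ := if i < j then 1 else if i = j then 3 else 4

theorem toepE_succ (i j : ℕ) : toepE (i + 1) (j + 1) = toepE i j := by
  simp [toepE]

/-- Binomial transform. -/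
def binT (i : ℕ) (f : ℕ → ℤ) : ℤ := ∑ k ∈ Finset.range (i + 1), (i.choose k : ℤ) * f k

theorem binT_eq (i N : ℕ) (h : i < N) (f : ℕ → ℤ) :
    binT i f = ∑ k ∈ Finset.range N, (i.choose k : ℤ) * f k := by
  unfold binT
  apply Finset.sum_subset
  · intro k; simp only [Finset.mem_range]; omega
  · intro k _ hk
    simp only [Finset.mem_range, not_lt] at hk
    rw [Nat.choose_eq_zero_of_lt (by omega)]; simp

theorem binT_zero (f : ℕ → ℤ) : binT 0 f = f 0 := by simp [binT]

theorem binT_succ (i : ℕ) (f : ℕ → ℤ) :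
    binT (i + 1) f = binT i f + binT i (fun k => f (k + 1)) := by
  rw [binT_eq i (i + 2) (by omega) f]
  unfold binT
  rw [Finset.sum_range_succ', Finset.sum_range_succ' _ (i + 1)]
  simp only [Nat.choose_succ_succ, Nat.choose_zero_right, Nat.cast_add, add_mul,
    Finset.sum_add_distrib]
  ring

theorem binT_add (i : ℕ) (f g : ℕ → ℤ) :
    binT i (fun k => f k + g k) = binT i f + binT i g := by
  simp [binT, mul_add, Finset.sum_add_distrib]

theorem binT_const (i : ℕ) (c : ℤ) : binT i (fun _ => c) = 2 ^ i * c := by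
  induction i with
  | zero => simp [binT_zero]
  | succ i ih => rw [binT_succ, ih]; ring

theorem binT_row (j : ℕ) : binT j (fun l => toepE 0 l) = 2 ^ j + 2 := by
  cases j with
  | zero => simp [binT_zero, toepE]
  | succ j =>
    induction j with
    | zero => simp [binT_succ, binT_zero, toepE]
    | succ j ih =>
      rw [binT_succ, ih]
      have : (fun k => toepE 0 (k + 1)) = fun _ => 1 := by funext k; simp [toepE]
      rw [this, binT_const]; ring

theorem binT_col (j : ℕ) : binT j (fun l => toepE l 0) = 2 ^ (j + 2) - 1 := by
  cases j with
  | zero => simp [binT_zero, toepE]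
  | succ j =>
    induction j with
    | zero => simp [binT_succ, binT_zero, toepE]
    | succ j ih =>
      rw [binT_succ, ih]
      have : (fun k => toepE (k + 1) 0) = fun _ => 4 := by funext k; simp [toepE]
      rw [this, binT_const]; ring

theorem pascal_eq (i j : ℕ) :
    pascalEntry (fun i => 2 ^ (i + 2) - 1) (fun i => 2 ^ i + 2) i j =
      binT i (fun k => binT j (fun l => toepE k l)) := by
  induction i generalizing j with
  | zero =>
    rw [binT_zero, binT_row]
    cases j with
    | zero => simp [pascalEntry]
    | succ j => simp [pascalEntry]
  | succ i ihi =>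
    induction j with
    | zero => simp only [binT_zero, binT_col, pascalEntry]
    | succ j ihj =>
      rw [pascalEntry, ihj, ihi]
      simp only [binT_succ, binT_add, toepE_succ]
      ring

theorem det_toep_rat (m : ℕ) :
    (Matrix.of fun i j : Fin m => ((toepE i j : ℤ) : ℚ)).det =
      (4 * 2 ^ m - (-1) ^ m) / 3 := by
  set A : Matrix (Fin m) (Fin m) ℚ :=
    Matrix.of fun i j : Fin m => ((toepE i j : ℤ) : ℚ) - 1 with hA
  have hdA : A.det = 2 ^ m := by
    rw [Matrix.det_of_lowerTriangular]
    · simp [hA, toepE]; norm_num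
    · intro i j hij
      have h : i < j := hij
      simp [hA, toepE, h]
  have hu : IsUnit A.det := by rw [hdA]; simp
  have key : ∀ y : ℚ, (Matrix.of fun i j : Fin m => ((toepE i j : ℤ) : ℚ) - 1 + y).det =
      2 ^ m * (1 + y * ∑ j, ∑ i, A⁻¹ i j) := by
    intro y
    have h := Matrix.det_add_replicateCol_mul_replicateRow (ι := Unit) hu
      (fun _ => y) (fun _ => 1)
    rw [hdA] at h
    have e : (Matrix.of fun i j : Fin m => ((toepE i j : ℤ) : ℚ) - 1 + y) =
        A + Matrix.replicateCol Unit (fun _ : Fin m => y) * Matrix.replicateRow Unit (fun _ : Fin m => (1 : ℚ)) := by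
      ext i j
      simp [hA, Matrix.mul_apply]
    rw [e, h]
    simp [Matrix.mul_apply, Matrix.det_unique, Finset.mul_sum, Finset.sum_mul, mul_comm]
  have h1 := key 1
  have h3 := key (-3)
  have hB : (Matrix.of fun i j : Fin m => ((toepE i j : ℤ) : ℚ) - 1 + -3).det = (-1) ^ m := by
    rw [Matrix.det_of_upperTriangular]
    · simp [toepE]; norm_num
    · intro i j hij
      have h : j < i := hij
      have h2 : ¬ i < j := not_lt.mpr h.le
      have h3 : (i : ℕ) ≠ j := by have : (j : ℕ) < i := h; omega
      simp [toepE, h2, h3]; norm_num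
  rw [hB] at h3
  simp only [sub_add_cancel] at h1
  rw [h1]
  linarith

theorem jac_closed (n : ℕ) : 3 * jacobsthalZ n = 2 ^ n - (-1) ^ n ∧
    3 * jacobsthalZ (n + 1) = 2 ^ (n + 1) - (-1) ^ (n + 1) := by
  induction n with
  | zero => simp [jacobsthalZ]
  | succ n ih =>
    refine ⟨ih.2, ?_⟩
    rw [jacobsthalZ, mul_add, ih.2]
    have := ih.1
    have h : 3 * (2 * jacobsthalZ n) = 2 * (2 ^ n - (-1) ^ n) := by linarith
    rw [h]; ring

theorem det_toep (m : ℕ) :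
    (Matrix.of fun i j : Fin m => toepE i j).det = jacobsthalZ (m + 2) := by
  have h := det_toep_rat m
  have e : (Matrix.of fun i j : Fin m => ((toepE i j : ℤ) : ℚ)) =
      (Int.castRingHom ℚ).mapMatrix (Matrix.of fun i j : Fin m => toepE i j) := by
    ext i j; simp
  rw [e, ← RingHom.map_det] at h
  have hj := (jac_closed (m + 2)).1
  have hq : (3 : ℚ) * jacobsthalZ (m + 2) = 2 ^ (m + 2) - (-1) ^ (m + 2) := by exact_mod_cast hj
  have : (((Matrix.of fun i j : Fin m => toepE i j).det : ℤ) : ℚ) = jacobsthalZ (m + 2) := by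
    rw [eq_intCast] at h
    rw [h, eq_comm, eq_div_iff (by norm_num), mul_comm, hq]; ring
  exact_mod_cast this

/-- Lower triangular Pascal matrix. -/
def lowP (m : ℕ) : Matrix (Fin m) (Fin m) ℤ :=
  Matrix.of fun i k => ((i : ℕ).choose k : ℤ)

theorem det_lowP (m : ℕ) : (lowP m).det = 1 := by
  rw [Matrix.det_of_lowerTriangular]
  · simp [lowP]
  · intro i j hij
    have h : (i : ℕ) < j := hij
    simp [lowP, Nat.choose_eq_zero_of_lt h]

/-- Corollary 3.8 (2): for `α_i = 2^(i+2) - 1` and `β_i = 2^i + 2`,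
`det P_{α,β}(n) = J_{n+3}` for every `n ≥ 0`. -/
theorem det_pascal_jacobsthal_succ (n : ℕ) :
    (pascalM (fun i => 2 ^ (i + 2) - 1) (fun i => 2 ^ i + 2) n).det =
      jacobsthalZ (n + 3) := by
  have e : pascalM (fun i => 2 ^ (i + 2) - 1) (fun i => 2 ^ i + 2) n =
      lowP (n + 1) * (Matrix.of fun i j : Fin (n + 1) => toepE i j) * (lowP (n + 1)).transpose := by
    ext i j
    rw [Matrix.mul_assoc]
    simp only [pascalM, Matrix.of_apply, pascal_eq, Matrix.mul_apply, lowP,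
      Matrix.transpose_apply]
    rw [binT_eq i (n + 1) i.2, Finset.sum_range]
    refine Finset.sum_congr rfl fun k _ => ?_
    rw [binT_eq j (n + 1) j.2, Finset.sum_range]
    congr 1
    exact Finset.sum_congr rfl fun l _ => mul_comm _ _
  rw [e, Matrix.det_mul, Matrix.det_mul, Matrix.det_transpose, det_lowP, det_toep]
  simp
end

section
/- Let a, b, c be complex numbers and for each positive integer n set T_n = T_n(a,b,c). Then det T_1 = c, det T_2 = c² − ab, and for all n ≥ 3, det T_n = (2c − a − b)·det T_{n−1} − (c − a)(c − b)·det T_{n−2}. -/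
theorem toeplitz3_aux (a b c : ℂ) (m : ℕ) :
    (toeplitz3 a b c (m + 2)).det =
      (2 * c - a - b) * (toeplitz3 a b c (m + 1)).det -
        (c - a) * (c - b) * (toeplitz3 a b c m).det := by
  set T := toeplitz3 a b c (m + 2) with hT
  have h01 : (0 : Fin (m + 2)) ≠ 1 := by simp
  set R := T.updateRow 0 (T 0 + (-1 : ℂ) • T 1) with hR
  have hRd : R.det = T.det := Matrix.det_updateRow_add_smul_self T h01 (-1)
  set N := R.updateCol 0 (fun k => R k 0 + (-1 : ℂ) • R k 1) with hN
  have hNd : N.det = R.det := Matrix.det_updateCol_add_smul_self R h01 (-1)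
  have e00 : N 0 0 = 2 * c - a - b := by
    simp [hN, hR, hT, toeplitz3, Matrix.updateRow_apply, Matrix.updateCol_apply]; ring
  have e01 : N 0 1 = a - c := by
    simp [hN, hR, hT, toeplitz3, Matrix.updateRow_apply, Matrix.updateCol_apply]; try ring
  have e0j : ∀ j : Fin m, N 0 j.succ.succ = 0 := by
    intro j
    have h : (1 : Fin (m + 2)) < j.succ.succ := by simp [Fin.lt_def]
    simp [hN, hR, hT, toeplitz3, Matrix.updateRow_apply, Matrix.updateCol_apply, h]
  have e10 : N 1 0 = b - c := by
    simp [hN, hR, hT, toeplitz3, Matrix.updateRow_apply, Matrix.updateCol_apply]; ring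
  have ei0 : ∀ i : Fin m, N i.succ.succ 0 = 0 := by
    intro i
    have h : ¬ i.succ.succ < (1 : Fin (m + 2)) := by simp [Fin.lt_def]
    have h2 : i.succ.succ ≠ (1 : Fin (m + 2)) := by
      intro h; have := congrArg Fin.val h; simp at this
    simp [hN, hR, hT, toeplitz3, Matrix.updateRow_apply, Matrix.updateCol_apply, h, h2]
  have eij : ∀ i j : Fin (m + 1), N i.succ j.succ = toeplitz3 a b c (m + 1) i j := by
    intro i j
    simp [hN, hR, hT, toeplitz3, Matrix.updateRow_apply, Matrix.updateCol_apply]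
  have m0 : N.submatrix Fin.succ Fin.succ = toeplitz3 a b c (m + 1) := by
    ext i j; exact eij i j
  have m1 : (N.submatrix Fin.succ (Fin.succAbove 1)).det =
      (b - c) * (toeplitz3 a b c m).det := by
    rw [Matrix.det_succ_column_zero, Fin.sum_univ_succ, Finset.sum_eq_zero]
    · have : ((N.submatrix Fin.succ (Fin.succAbove 1)).submatrix (Fin.succAbove 0) Fin.succ)
          = toeplitz3 a b c m := by
        ext i j
        have h : (1 : Fin (m + 2)).succAbove j.succ = j.succ.succ := by
          rw [← Fin.succ_zero_eq_one, Fin.succ_succAbove_succ, Fin.zero_succAbove]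
        simp only [Matrix.submatrix_apply, Fin.zero_succAbove, h, eij]
        simp [toeplitz3]
      rw [this]
      simp [e10]
    · intro i _
      simp [ei0]
  rw [← hRd, ← hNd, Matrix.det_succ_row_zero, Fin.sum_univ_succ, Fin.sum_univ_succ,
    Finset.sum_eq_zero]
  · have m0' : N.submatrix Fin.succ (Fin.succAbove 0) = toeplitz3 a b c (m + 1) := by
      rw [← m0]; ext i j; simp
    rw [m0', Fin.succ_zero_eq_one, m1, e00, e01]
    simp
    ring
  · intro j _
    simp [e0j]

/-- Lemma 2.3 (recursive part): `det T_1 = c`, `det T_2 = c² - ab`, and for all `n ≥ 3`,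
`det T_n = (2c - a - b) det T_{n-1} - (c - a)(c - b) det T_{n-2}`. -/
theorem det_toeplitz3_recurrence (a b c : ℂ) :
    (toeplitz3 a b c 1).det = c ∧
    (toeplitz3 a b c 2).det = c ^ 2 - a * b ∧
    ∀ n : ℕ, 3 ≤ n →
      (toeplitz3 a b c n).det =
        (2 * c - a - b) * (toeplitz3 a b c (n - 1)).det -
          (c - a) * (c - b) * (toeplitz3 a b c (n - 2)).det := by
  refine ⟨by simp [toeplitz3], by simp [Matrix.det_fin_two, toeplitz3]; ring, ?_⟩
  intro n hn
  obtain ⟨m, rfl⟩ : ∃ m, n = m + 2 := ⟨n - 2, by omega⟩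
  exact toeplitz3_aux a b c m
end

section
/- Let a, b, c be complex numbers and n ≥ 3 an integer. Then det T_n(a,b,c) = 0 if a = b = c; det T_n(a,b,c) = (c + a(n−1))·(c − a)^{n−1} if a = b ≠ c; and det T_n(a,b,c) = (b/(b−a))·(c − a)^n − (a/(b−a))·(c − b)^n if a ≠ b. -/
theorem toeplitz3_aux_tri (a b c : ℂ) (n : ℕ) :
    ((toeplitz3 a b c (n+1)).updateCol 0 (fun _ => 1)).det = (c - a) ^ n := by
  rw [← Matrix.det_transpose]
  rw [Matrix.det_eq_of_forall_row_eq_smul_add_const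
    (B := ((toeplitz3 0 (b-a) (c-a) (n+1)).updateCol 0 (fun _ => 1)).transpose)
    (fun j => if j = 0 then 0 else a) 0 (by simp)]
  · rw [Matrix.det_transpose, Matrix.det_of_lowerTriangular, Fin.prod_univ_succ]
    · simp [toeplitz3, Matrix.updateCol_apply]
    · intro i j hij
      have hij : i < j := hij
      have h0 : j ≠ 0 := by rintro rfl; simp at hij
      have h2 : (i : ℕ) < j := hij
      simp [toeplitz3, Matrix.updateCol_apply, h0, h2.ne]
      intro h; exact absurd hij (not_lt.mpr h)
  · intro i j
    by_cases h : i = 0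
    · subst h; simp
    · simp only [toeplitz3, Matrix.transpose_apply, Matrix.updateCol_apply, h, if_false, if_true, Matrix.of_apply]
      split_ifs <;> ring

theorem toeplitz3_aux_rec (a b c : ℂ) (n : ℕ) :
    (toeplitz3 a b c (n+1)).det = (c - b) * (toeplitz3 a b c n).det + b * (c - a) ^ n := by
  have h : toeplitz3 a b c (n+1) = (toeplitz3 a b c (n+1)).updateCol 0
      ((c - b) • (Pi.single 0 1 : Fin (n+1) → ℂ) + b • (fun _ => 1)) := by
    ext i j
    by_cases hj : j = 0
    · subst hj
      by_cases hi : i = 0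
      · subst hi; simp [toeplitz3]
      · simp [toeplitz3, hi]
    · simp [Matrix.updateCol_apply, hj]
  rw [h, Matrix.det_updateCol_add, Matrix.det_updateCol_smul, Matrix.det_updateCol_smul,
    toeplitz3_aux_tri]
  congr 2
  rw [Matrix.det_succ_column_zero, Fin.sum_univ_succ]
  simp
  congr 1
  ext i j
  simp [toeplitz3, Matrix.updateCol_apply]

theorem toeplitz3_aux_eq (a c : ℂ) (n : ℕ) :
    (toeplitz3 a a c (n+1)).det = (c + a * (n : ℂ)) * (c - a) ^ n := by
  induction n with
  | zero => rw [toeplitz3_aux_rec]; simp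
  | succ k ih => rw [toeplitz3_aux_rec, ih]; push_cast; ring

theorem toeplitz3_aux_ne (a b c : ℂ) (n : ℕ) (h : a ≠ b) :
    (toeplitz3 a b c n).det =
        b / (b - a) * (c - a) ^ n - a / (b - a) * (c - b) ^ n := by
  have h' : b - a ≠ 0 := sub_ne_zero.mpr h.symm
  induction n with
  | zero => simp; field_simp
  | succ k ih => rw [toeplitz3_aux_rec, ih]; field_simp; ring

/-- Lemma 2.3 (explicit part): for `n ≥ 3`,
`det T_n = 0` if `a = b = c`;
`det T_n = (c + a(n-1))(c - a)^(n-1)` if `a = b ≠ c`;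
`det T_n = (b/(b-a))(c-a)^n - (a/(b-a))(c-b)^n` if `a ≠ b`. -/
theorem det_toeplitz3_explicit (a b c : ℂ) (n : ℕ) (hn : 3 ≤ n) :
    (a = b ∧ b = c → (toeplitz3 a b c n).det = 0) ∧
    (a = b ∧ b ≠ c →
      (toeplitz3 a b c n).det = (c + a * ((n - 1 : ℕ) : ℂ)) * (c - a) ^ (n - 1)) ∧
    (a ≠ b →
      (toeplitz3 a b c n).det =
        b / (b - a) * (c - a) ^ n - a / (b - a) * (c - b) ^ n) := by
  obtain ⟨m, rfl⟩ : ∃ m, n = m + 1 := ⟨n - 1, by omega⟩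
  refine ⟨?_, ?_, toeplitz3_aux_ne a b c _⟩
  · rintro ⟨rfl, rfl⟩
    rw [toeplitz3_aux_eq, sub_self, zero_pow (by omega), mul_zero]
  · rintro ⟨rfl, -⟩
    simpa using toeplitz3_aux_eq a c m
end

section
/- Let a, b, r be integers with r ≥ 1 and let G = G^{(a,b,r,1)}. Then: (1) the binomial transform Ǧ satisfies Ǧ_0 = a, Ǧ_1 = a + b, and Ǧ_i = (r+2)·Ǧ_{i−1} − r·Ǧ_{i−2} for all i ≥ 2; (2) the binomial transform (G̃)̌ of the sequence G̃ (where G̃_i = (−1)^i·G_i) satisfies (G̃)̌_0 = a, (G̃)̌_1 = a − b, and (G̃)̌_i = (2−r)·(G̃)̌_{i−1} + r·(G̃)̌_{i−2} for all i ≥ 2. -/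
theorem btrans_succ_aux (α : ℕ → ℤ) (n : ℕ) :
    btrans α (n + 1) = btrans α n + btrans (fun k => α (k + 1)) n := by
  unfold btrans
  rw [Finset.sum_range_succ' _ (n + 1)]
  simp only [Nat.choose_succ_succ, Nat.cast_add, add_mul, Finset.sum_add_distrib]
  rw [Finset.sum_range_succ (fun k => ((n.choose (k + 1) : ℕ) : ℤ) * α (k + 1)) n,
    Finset.sum_range_succ' (fun k => ((n.choose k : ℕ) : ℤ) * α k) n]
  simp
  ring

theorem btrans_rec_aux (α : ℕ → ℤ) (c : ℤ) (h : ∀ n, α (n + 2) = c * α (n + 1) + α n) (n : ℕ) :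
    btrans α (n + 2) = (c + 2) * btrans α (n + 1) - c * btrans α n := by
  have h3 : btrans (fun k => α (k + 1 + 1)) n
      = c * btrans (fun k => α (k + 1)) n + btrans α n := by
    unfold btrans
    rw [Finset.mul_sum, ← Finset.sum_add_distrib]
    refine Finset.sum_congr rfl fun k _ => ?_
    have hk : α (k + 1 + 1) = c * α (k + 1) + α k := h k
    simp only [hk]
    ring
  have h1 := btrans_succ_aux α n
  have h2 := btrans_succ_aux α (n + 1)
  have h4 := btrans_succ_aux (fun k => α (k + 1)) n
  rw [h2, h4, h3, h1]
  ring

/-- Lemma 2.5: for `G = G^{(a,b,r,1)}` with `r ≥ 1`: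
(1) `Ǧ_0 = a`, `Ǧ_1 = a + b` and `Ǧ_i = (r+2) Ǧ_{i-1} - r Ǧ_{i-2}` for `i ≥ 2`;
(2) `(G̃)̌_0 = a`, `(G̃)̌_1 = a - b` and `(G̃)̌_i = (2-r) (G̃)̌_{i-1} + r (G̃)̌_{i-2}`
for `i ≥ 2`. -/
theorem btrans_gib_recurrence (a b r : ℤ) (hr : 1 ≤ r) :
    (btrans (gib a b r) 0 = a ∧ btrans (gib a b r) 1 = a + b ∧
      ∀ i : ℕ, 2 ≤ i →
        btrans (gib a b r) i =
          (r + 2) * btrans (gib a b r) (i - 1) - r * btrans (gib a b r) (i - 2)) ∧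
    (btrans (fun i => (-1) ^ i * gib a b r i) 0 = a ∧
      btrans (fun i => (-1) ^ i * gib a b r i) 1 = a - b ∧
      ∀ i : ℕ, 2 ≤ i →
        btrans (fun i => (-1) ^ i * gib a b r i) i =
          (2 - r) * btrans (fun i => (-1) ^ i * gib a b r i) (i - 1) +
            r * btrans (fun i => (-1) ^ i * gib a b r i) (i - 2)) := by
  refine ⟨⟨by simp [btrans, gib], by simp [btrans, gib, Finset.sum_range_succ], ?_⟩,
    by simp [btrans, gib], by simp [btrans, gib, Finset.sum_range_succ]; ring, ?_⟩
  · intro i hi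
    obtain ⟨n, rfl⟩ := Nat.exists_eq_add_of_le' hi
    exact btrans_rec_aux _ r (fun n => by rw [gib]) n
  · intro i hi
    obtain ⟨n, rfl⟩ := Nat.exists_eq_add_of_le' hi
    have := btrans_rec_aux (fun i => (-1) ^ i * gib a b r i) (-r)
      (fun n => by simp only [gib]; ring) n
    simp only [Nat.add_sub_cancel, show n + 2 - 1 = n + 1 from rfl]
    rw [this]
    ring
end
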